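/- Let s_k denote the number of simple permutations in A_k and a_k = |A_k|. For n ≥ 2, a_n = ∑_{i=2}^{n} s_i · a_{n−i+1}, with a_1 = 1. -/

import Mathlib

/-- Occurrence of the vincular pattern ⟨32⟩⟨41⟩: two disjoint adjacent pairs, in this
order, order-isomorphic to 3241. -/
def P3241 {n : ℕ} (π : Equiv.Perm (Fin n)) : Prop :=
  ∃ i i' j j' : Fin n, (i' : ℕ) = (i : ℕ) + 1 ∧ (j' : ℕ) = (j : ℕ) + 1 ∧
    (i' : ℕ) < (j : ℕ) ∧ π j' < π i' ∧ π i' < π i ∧ π i < π j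

/-- Occurrence of the vincular pattern ⟨14⟩⟨23⟩. -/
def P1423 {n : ℕ} (π : Equiv.Perm (Fin n)) : Prop :=
  ∃ i i' j j' : Fin n, (i' : ℕ) = (i : ℕ) + 1 ∧ (j' : ℕ) = (j : ℕ) + 1 ∧
    (i' : ℕ) < (j : ℕ) ∧ π i < π j ∧ π j < π j' ∧ π j' < π i'

/-- Occurrence of the vincular pattern ⟨41⟩⟨32⟩. -/
def P4132 {n : ℕ} (π : Equiv.Perm (Fin n)) : Prop :=
  ∃ i i' j j' : Fin n, (i' : ℕ) = (i : ℕ) + 1 ∧ (j' : ℕ) = (j : ℕ) + 1 ∧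
    (i' : ℕ) < (j : ℕ) ∧ π i' < π j' ∧ π j' < π j ∧ π j < π i

/-- Occurrence of the vincular pattern ⟨23⟩⟨14⟩. -/
def P2314 {n : ℕ} (π : Equiv.Perm (Fin n)) : Prop :=
  ∃ i i' j j' : Fin n, (i' : ℕ) = (i : ℕ) + 1 ∧ (j' : ℕ) = (j : ℕ) + 1 ∧
    (i' : ℕ) < (j : ℕ) ∧ π j < π i ∧ π i < π i' ∧ π i' < π j'

/-- Occurrence of the vincular pattern ⟨23⟩⟨1⟩ where the `1` must be the final
entry of `π`. -/
def P231final {n : ℕ} (π : Equiv.Perm (Fin n)) : Prop :=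
  ∃ i i' l : Fin n, (i' : ℕ) = (i : ℕ) + 1 ∧ (l : ℕ) = n - 1 ∧
    (i' : ℕ) < (l : ℕ) ∧ π l < π i ∧ π i < π i'

/-- Occurrence of the vincular pattern ⟨1⟩⟨32⟩ where the `1` must be the first
entry of `π`. -/
def P132initial {n : ℕ} (π : Equiv.Perm (Fin n)) : Prop :=
  ∃ f j j' : Fin n, (f : ℕ) = 0 ∧ (j' : ℕ) = (j : ℕ) + 1 ∧
    0 < (j : ℕ) ∧ π f < π j' ∧ π j' < π j

/-- `π` avoids all six vincular patterns
⟨32⟩⟨41⟩, ⟨14⟩⟨23⟩, ⟨41⟩⟨32⟩, ⟨23⟩⟨14⟩, ⟨23⟩⟨1 final⟩, ⟨1 initial⟩⟨32⟩. -/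
def MemA {n : ℕ} (π : Equiv.Perm (Fin n)) : Prop :=
  ¬ P3241 π ∧ ¬ P1423 π ∧ ¬ P4132 π ∧ ¬ P2314 π ∧ ¬ P231final π ∧ ¬ P132initial π

/-- The positions `i ≤ x ≤ j` form a block (interval) of `π`: the values on those
positions form an interval of values of the same length. -/
def IsPermBlock {k : ℕ} (π : Equiv.Perm (Fin k)) (i j : Fin k) : Prop :=
  ∃ v : ℕ, ∀ x : Fin k, i ≤ x → x ≤ j →
    v ≤ (π x : ℕ) ∧ (π x : ℕ) ≤ v + ((j : ℕ) - (i : ℕ))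

/-- `π` is simple: its only blocks are the singletons and the whole interval. -/
def IsSimplePerm {k : ℕ} (π : Equiv.Perm (Fin k)) : Prop :=
  ∀ i j : Fin k, i ≤ j → IsPermBlock π i j →
    (i = j ∨ ((i : ℕ) = 0 ∧ (j : ℕ) = k - 1))

/-- `a k = |A_k|`. -/
noncomputable def aCard (k : ℕ) : ℕ := Nat.card {π : Equiv.Perm (Fin k) // MemA π}

/-- `s k`: the number of simple permutations in `A_k`. -/
noncomputable def sCard (k : ℕ) : ℕ :=
  Nat.card {π : Equiv.Perm (Fin k) // MemA π ∧ IsSimplePerm π}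

/-!
Put the value `∞` before the first and after the last entry of a permutation. The six patterns
then say together that no ascent `f i < f (i + 1)` has its range of values strictly inside that of
another ascent, and likewise for descents. Let a block of values `v, …, v + k` with `k > 0` lie to
the left of the smallest value `0`. Stepping from below the block to above it nests any ascent
inside the block, so the block is decreasing; stepping down past it nests its descents, so the
values below `v` follow the block immediately, and its last entry `v` forms a block `0, …, v`
together with them. By reversal, a permutation in the class is therefore simple as soon as it has
no proper nontrivial block at the bottom.

If `f` is the inflation of `0` in `ρ` by a block `σ` of length `k + 1`, then subtracting `k` from
the values of `f` recovers `ρ`, and cutting them off at `k + 1` recovers `σ`. Both operations are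
monotone, so nested steps transfer between `f` and the pair `(ρ, σ)`. Finally `ρ` is simple exactly
if the inflated block is the longest proper bottom block of `f`, which gives existence and
uniqueness of the decomposition.
-/

/-- A permutation of `0, …, n - 1` written at the positions `1, …, n` of a sequence on `ℕ` whose
other values are all `n`, which plays the role of `∞`. -/
structure IsPaddedPerm (n : ℕ) (f : ℕ → ℕ) : Prop where
  le : ∀ x, f x ≤ n
  lt_iff : ∀ x, f x < n ↔ 1 ≤ x ∧ x ≤ n
  injOn : Set.InjOn f (Set.Icc 1 n)

/-- No ascent has its range of values strictly inside that of another ascent, and no descent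
strictly inside that of another descent. For padded permutations this is membership in the class
`A`, see `memA_iff_noNestedSteps`. -/
def NoNestedSteps (f : ℕ → ℕ) : Prop :=
  ∀ i j, ¬ (f i < f j ∧ f j < f (j + 1) ∧ f (j + 1) < f (i + 1)) ∧
    ¬ (f (i + 1) < f (j + 1) ∧ f (j + 1) < f j ∧ f j < f i)

/-- The `k + 1` positions from `i` on carry values among the `k + 1` values from `v` on. For `v = 0`
this is a block at the bottom. -/
def IsBlock (f : ℕ → ℕ) (i k v : ℕ) : Prop :=
  ∀ x, i ≤ x → x ≤ i + k → v ≤ f x ∧ f x ≤ v + k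

/-- Simplicity tested on bottom blocks only; within the class `A` it is equivalent to simplicity,
see `isSimplePerm_iff_isBottomSimple`. -/
def IsBottomSimple (n : ℕ) (f : ℕ → ℕ) : Prop :=
  ∀ p k, k + 1 < n → IsBlock f p k 0 → k = 0

section PaddedPerm

variable {n i k v x y z : ℕ} {f : ℕ → ℕ}

namespace IsPaddedPerm

theorem eq_of_eq_of_lt (hf : IsPaddedPerm n f) (h : f x = f y) (hx : f x < n) : x = y :=
  hf.injOn ((hf.lt_iff x).1 hx) ((hf.lt_iff y).1 (h ▸ hx)) h

theorem bijOn (hf : IsPaddedPerm n f) : Set.BijOn f (Set.Icc 1 n) (Set.Iio n) := by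
  have hmaps : Set.MapsTo f (Finset.Icc 1 n) (Finset.range n) := fun x hx => by
    simpa using (hf.lt_iff x).2 (by simpa using hx)
  have hsurj := Finset.surjOn_of_injOn_of_card_le f hmaps (by simpa using hf.injOn) (by simp)
  exact ⟨by simpa using hmaps, hf.injOn, by simpa using hsurj⟩

theorem exists_eq (hf : IsPaddedPerm n f) (hv : v < n) : ∃ x, f x = v :=
  let ⟨x, _, hx⟩ := hf.bijOn.surjOn hv
  ⟨x, hx⟩

theorem mem_block_iff (hf : IsPaddedPerm n f) (hb : IsBlock f i k v) (hvk : v + k < n) :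
    v ≤ f x ∧ f x ≤ v + k ↔ i ≤ x ∧ x ≤ i + k := by
  refine ⟨fun hx => ?_, fun hx => hb x hx.1 hx.2⟩
  have hmaps : Set.MapsTo f (Finset.Icc i (i + k)) (Finset.Icc v (v + k)) := fun y hy => by
    simpa using hb y (by simp_all) (by simp_all)
  have hinj : Set.InjOn f (Finset.Icc i (i + k)) := fun y hy z _ h =>
    hf.eq_of_eq_of_lt h ((Finset.mem_Icc.1 (hmaps hy)).2.trans_lt hvk)
  obtain ⟨y, hy, hyx⟩ :=
    Finset.surjOn_of_injOn_of_card_le f hmaps hinj (by simp only [Nat.card_Icc]; omega)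
      (by simpa using hx : f x ∈ _)
  rw [← hf.eq_of_eq_of_lt hyx (by omega)]
  simpa using hy

theorem block_top_lt (hf : IsPaddedPerm n f) (hb : IsBlock f i k v) (hi : 1 ≤ i)
    (hik : i + k ≤ n) : v + k < n := by
  have hrange : ∀ x ∈ Finset.Icc i (i + k), f x < n := fun x hx =>
    (hf.lt_iff x).2 (by rw [Finset.mem_Icc] at hx; omega)
  have hcard := Finset.card_le_card_of_injOn (s := Finset.Icc i (i + k)) (t := Finset.Ico v n) f
    (fun x hx => by
      have := hrange x hx
      simp only [Finset.coe_Icc, Finset.coe_Ico, Set.mem_Icc, Set.mem_Ico] at hx ⊢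
      have := hb x hx.1 hx.2
      omega)
    (fun x hx y _ h => hf.eq_of_eq_of_lt h (hrange x hx))
  simp only [Nat.card_Icc, Nat.card_Ico] at hcard
  omega

theorem lt_or_lt_of_notMem_block (hf : IsPaddedPerm n f) (hb : IsBlock f i k v) (hvk : v + k < n)
    (hx : x < i ∨ i + k < x) : f x < v ∨ v + k < f x := by
  have := hf.mem_block_iff hb hvk (x := x)
  omega

theorem block_position_le (hf : IsPaddedPerm n f) (hb : IsBlock f i k v) (hvk : v + k < n) :
    1 ≤ i ∧ i + k ≤ n := by
  have := hb i le_rfl (by omega)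
  have := hb (i + k) (by omega) le_rfl
  have := (hf.lt_iff i).1 (by omega)
  have := (hf.lt_iff (i + k)).1 (by omega)
  omega

theorem block_position_unique (hf : IsPaddedPerm n f) (hb : IsBlock f i k v)
    (hb' : IsBlock f y k v) (hvk : v + k < n) : i = y := by
  have first := (hf.mem_block_iff hb hvk).1 (hb' y le_rfl (by omega))
  have last := (hf.mem_block_iff hb hvk).1 (hb' (y + k) (by omega) le_rfl)
  omega

end IsPaddedPerm

theorem lt_of_isBlock_of_left_of_zero (hf : IsPaddedPerm n f) (hA : NoNestedSteps f)
    (hb : IsBlock f i k v) (hvk : v + k < n) (hz : i + k < z) (hfz : f z = 0) (hx : i ≤ x)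
    (hxk : x < i + k) : f (x + 1) < f x := by
  have hbx := hb x hx hxk.le
  have hbx' := hb (x + 1) (by omega) hxk
  by_contra! hle
  have hasc : f x < f (x + 1) := hle.lt_of_ne fun h => by
    have := hf.eq_of_eq_of_lt h (by omega)
    omega
  have hbelow : ∀ y, z ≤ y → f y < v := by
    intro y hy
    induction y, hy using Nat.le_induction with
    | base => rcases hf.lt_or_lt_of_notMem_block hb hvk (Or.inr hz) <;> omega
    | succ y hy ih =>
      have := hf.lt_or_lt_of_notMem_block hb hvk (x := y + 1) (by omega)
      have := (hA y x).1
      omega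
  have := hbelow (max z (n + 1)) (by omega)
  have := hf.lt_iff (max z (n + 1))
  omega

theorem lt_of_left_of_descending_isBlock (hf : IsPaddedPerm n f) (hA : NoNestedSteps f)
    (hb : IsBlock f i k v) (hvk : v + k < n) (hk : 0 < k) (hdesc : f (i + 1) < f i)
    (hx : x < i) : v + k < f x := by
  induction x with
  | zero =>
    have := hf.lt_iff 0
    omega
  | succ x ih =>
    have := ih (by omega)
    have := hf.lt_or_lt_of_notMem_block hb hvk (Or.inl hx)
    have := hb i le_rfl (by omega)
    have := hb (i + 1) (by omega) (by omega)
    have := (hA x i).2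
    omega

theorem lt_of_right_of_descending_isBlock (hf : IsPaddedPerm n f) (hA : NoNestedSteps f)
    (hb : IsBlock f i k v) (hvk : v + k < n) (hk : 0 < k) (hdesc : f (i + 1) < f i)
    (hx : i + k < x) (hxy : x ≤ y) (hy : f y < v) : f x < v := by
  by_contra hfx
  have habove : v + k < f y := by
    induction y, hxy using Nat.le_induction with
    | base => exact absurd hy hfx
    | succ y hxy ih =>
      have := hf.lt_or_lt_of_notMem_block hb hvk (x := y) (by omega)
      have := hb i le_rfl (by omega)
      have := hb (i + 1) (by omega) (by omega)
      have := (hA y i).2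
      omega
  omega

theorem apply_last_of_descending_isBlock (hf : IsPaddedPerm n f) (hb : IsBlock f i k v)
    (hvk : v + k < n) (hdesc : ∀ x, i ≤ x → x < i + k → f (x + 1) < f x) : f (i + k) = v := by
  obtain ⟨x, rfl⟩ := hf.exists_eq (v := v) (by omega)
  have hx := (hf.mem_block_iff hb hvk (x := x)).1 (by omega)
  rcases hx.2.lt_or_eq with h | rfl
  · have := hdesc x hx.1 h
    have := hb (x + 1) (by omega) (by omega)
    omega
  · rfl

theorem isBlock_zero_of_left_of_zero (hf : IsPaddedPerm n f) (hA : NoNestedSteps f)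
    (hb : IsBlock f i k v) (hvk : v + k < n) (hk : 0 < k) (hz : i + k < z) (hfz : f z = 0) :
    IsBlock f (i + k) v 0 := by
  have hdesc : ∀ x, i ≤ x → x < i + k → f (x + 1) < f x := fun x =>
    lt_of_isBlock_of_left_of_zero hf hA hb hvk hz hfz
  have hdesc_i := hdesc i le_rfl (by omega)
  have hlast : f (i + k) = v := apply_last_of_descending_isBlock hf hb hvk hdesc
  have hright : ∀ y, f y < v → i + k < y := by
    intro y hy
    have := lt_of_left_of_descending_isBlock hf hA hb hvk hk hdesc_i (x := y)
    have := hf.mem_block_iff hb hvk (x := y)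
    omega
  intro x hx hxv
  refine ⟨Nat.zero_le _, ?_⟩
  by_contra! hfx
  have hsurj : Set.SurjOn f (Finset.Ioo (i + k) x) (Finset.range v) := by
    intro w hw
    obtain ⟨y, rfl⟩ := hf.exists_eq (v := w) ((Finset.mem_range.1 hw).trans (by omega))
    have hyv : f y < v := by simpa using hw
    have hyx : y < x := by
      by_contra! hxy
      have := lt_of_right_of_descending_isBlock hf hA hb hvk hk hdesc_i
        (hx.lt_of_ne (by rintro rfl; omega)) hxy hyv
      omega
    exact ⟨y, by simpa using ⟨hright y hyv, hyx⟩, rfl⟩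
  have hcard := Finset.card_le_card_of_surjOn f hsurj
  rw [Finset.card_range, Nat.card_Ioo] at hcard
  have : x ≠ i + k := by rintro rfl; omega
  omega

/-- The reversal of a padded permutation of length `n`; truncated subtraction keeps the padding. -/
def reversePadded (n : ℕ) (f : ℕ → ℕ) (x : ℕ) : ℕ := f (n + 1 - x)

theorem IsPaddedPerm.reversePadded (hf : IsPaddedPerm n f) :
    IsPaddedPerm n (reversePadded n f) where
  le _ := hf.le _
  lt_iff x := (hf.lt_iff _).trans (by omega)
  injOn x hx y hy h := by
    simp only [Set.mem_Icc] at hx hy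
    have := hf.eq_of_eq_of_lt h ((hf.lt_iff _).2 (by omega))
    omega

theorem NoNestedSteps.reversePadded (hA : NoNestedSteps f) :
    NoNestedSteps (reversePadded n f) := by
  intro i j
  have h := hA (n - i) (n - j)
  simp only [_root_.reversePadded]
  by_cases hi : i ≤ n <;> by_cases hj : j ≤ n
  · rw [show n - i + 1 = n + 1 - i by omega, show n - j + 1 = n + 1 - j by omega] at h
    rw [show n + 1 - (i + 1) = n - i by omega, show n + 1 - (j + 1) = n - j by omega]
    omega
  all_goals grind

theorem IsBlock.reversePadded (hb : IsBlock f i k v) (hik : i + k ≤ n) :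
    IsBlock (reversePadded n f) (n + 1 - (i + k)) k v :=
  fun _ _ _ => hb _ (by omega) (by omega)

theorem reversePadded_reversePadded (hf : IsPaddedPerm n f) :
    reversePadded n (reversePadded n f) = f := by
  funext x
  have := hf.le x
  have := hf.le 0
  have := hf.lt_iff x
  have := hf.lt_iff 0
  simp only [reversePadded]
  by_cases hx : x ≤ n + 1
  · congr 1
    omega
  · rw [show n + 1 - (n + 1 - x) = n + 1 by omega]
    have := hf.le (n + 1)
    have := hf.lt_iff (n + 1)
    omega

theorem exists_isBlock_zero_of_isBlock (hf : IsPaddedPerm n f) (hA : NoNestedSteps f)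
    (hb : IsBlock f i k v) (hvk : v + k < n) (hk : 0 < k) (hkn : k + 1 < n) :
    ∃ p l, 0 < l ∧ l + 1 < n ∧ IsBlock f p l 0 := by
  rcases Nat.eq_zero_or_pos v with rfl | hv
  · exact ⟨i, k, hk, hkn, hb⟩
  obtain ⟨z, hfz⟩ := hf.exists_eq (v := 0) (by omega)
  have hz := (hf.lt_iff z).1 (by omega)
  have hout := hf.mem_block_iff hb hvk (x := z)
  by_cases hright : i + k < z
  · exact ⟨i + k, v, hv, by omega, isBlock_zero_of_left_of_zero hf hA hb hvk hk hright hfz⟩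
  · have hik := hf.block_position_le hb hvk
    have hrev := isBlock_zero_of_left_of_zero hf.reversePadded hA.reversePadded
      (hb.reversePadded hik.2) hvk hk (z := n + 1 - z) (by omega)
      (by rwa [reversePadded, show n + 1 - (n + 1 - z) = z by omega])
    have hrange := hf.reversePadded.block_position_le hrev (by omega)
    exact ⟨_, v, hv, by omega, reversePadded_reversePadded hf ▸ hrev.reversePadded hrange.2⟩

end PaddedPerm

section Inflation

variable {m n k l p q x : ℕ} {f r s : ℕ → ℕ}

/-- The map of positions contracting `p, …, p + k` to `p`. -/
def collapse (p k x : ℕ) : ℕ := max (min x p) (x - k)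

/-- A right inverse of `collapse p k` on pairs of neighbouring positions. -/
def expand (p k y : ℕ) : ℕ := if y < p then y else y + k

/-- The inflation of the entry `0` at position `p` of `r` by `s`, of length `k + 1`. Outside the
block the padding of `s` makes the second summand equal to `k`. -/
def inflate (p k : ℕ) (r s : ℕ → ℕ) (x : ℕ) : ℕ := r (collapse p k x) + min k (s (x + 1 - p))

/-- The quotient of `f` by a bottom block at the positions `p, …, p + k`. -/
def contract (p k : ℕ) (f : ℕ → ℕ) (y : ℕ) : ℕ := f (expand p k y) - k

/-- The bottom block of `f` at the positions `p, …, p + k`, as a padded permutation of length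
`k + 1`. -/
def blockAt (p k : ℕ) (f : ℕ → ℕ) (t : ℕ) : ℕ := min (f (p + t - 1)) (k + 1)

theorem collapse_expand (p k y : ℕ) : collapse p k (expand p k y) = y := by
  simp only [collapse, expand]
  split_ifs <;> omega

theorem collapse_expand_add_one (p k y : ℕ) : collapse p k (expand p k y + 1) = y + 1 := by
  simp only [collapse, expand]
  split_ifs <;> omega

theorem collapse_eq_iff : collapse p k x = p ↔ p ≤ x ∧ x ≤ p + k := by
  simp only [collapse]
  omega

theorem expand_collapse (hx : ¬(p ≤ x ∧ x ≤ p + k)) : expand p k (collapse p k x) = x := by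
  unfold expand collapse
  split <;> omega

theorem collapse_add_one (p k x : ℕ) :
    collapse p k (x + 1) = collapse p k x ∨ collapse p k (x + 1) = collapse p k x + 1 := by
  simp only [collapse]
  omega

theorem inflate_sub (hs : IsPaddedPerm (k + 1) s) (hr₀ : r p = 0) (x : ℕ) :
    inflate p k r s x - k = r (collapse p k x) := by
  simp only [inflate]
  have := hs.lt_iff (x + 1 - p)
  by_cases hx : p ≤ x ∧ x ≤ p + k
  · rw [collapse_eq_iff.2 hx, hr₀]
    omega
  · omega

theorem min_inflate (hr : IsPaddedPerm m r) (hm : 0 < m) (hs : IsPaddedPerm (k + 1) s)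
    (hr₀ : r p = 0) (x : ℕ) : min (inflate p k r s x) (k + 1) = s (x + 1 - p) := by
  simp only [inflate]
  have := hs.lt_iff (x + 1 - p)
  have := hs.le (x + 1 - p)
  have := hr.lt_iff p
  by_cases hx : p ≤ x ∧ x ≤ p + k
  · rw [collapse_eq_iff.2 hx, hr₀]
    omega
  · have : r (collapse p k x) ≠ 0 := fun h =>
      hx (collapse_eq_iff.1 (hr.eq_of_eq_of_lt (h.trans hr₀.symm) (by omega)))
    omega

theorem contract_inflate (hs : IsPaddedPerm (k + 1) s) (hr₀ : r p = 0) :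
    contract p k (inflate p k r s) = r := by
  funext y
  rw [contract, inflate_sub hs hr₀, collapse_expand]

theorem blockAt_inflate (hr : IsPaddedPerm m r) (hm : 0 < m) (hs : IsPaddedPerm (k + 1) s)
    (hr₀ : r p = 0) : blockAt p k (inflate p k r s) = s := by
  have := hr.lt_iff p
  funext t
  rw [blockAt, min_inflate hr hm hs hr₀, show p + t - 1 + 1 - p = t by omega]

theorem isBlock_inflate (hs : IsPaddedPerm (k + 1) s) (hr₀ : r p = 0) :
    IsBlock (inflate p k r s) p k 0 := by
  intro x hpx hxp
  have := inflate_sub hs hr₀ x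
  rw [collapse_eq_iff.2 ⟨hpx, hxp⟩] at this
  omega

theorem isPaddedPerm_inflate (hr : IsPaddedPerm m r) (hm : 0 < m) (hs : IsPaddedPerm (k + 1) s)
    (hr₀ : r p = 0) : IsPaddedPerm (m + k) (inflate p k r s) := by
  have hp := (hr.lt_iff p).1 (by omega)
  have hsub := inflate_sub hs hr₀
  have hmin := min_inflate hr hm hs hr₀
  have hle : ∀ x, inflate p k r s x ≤ m + k := fun x => by
    have := hr.le (collapse p k x)
    have := hsub x
    omega
  have hlt : ∀ x, inflate p k r s x < m + k ↔ 1 ≤ x ∧ x ≤ m + k := by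
    intro x
    have hcol : 1 ≤ collapse p k x ∧ collapse p k x ≤ m ↔ 1 ≤ x ∧ x ≤ m + k := by
      simp only [collapse]
      omega
    rw [← hcol, ← hr.lt_iff, ← hsub x]
    omega
  refine ⟨hle, hlt, fun x hx y _ hxy => ?_⟩
  have hfx := (hlt x).2 hx
  have hcol : r (collapse p k x) = r (collapse p k y) := by rw [← hsub, ← hsub, hxy]
  have hblock : s (x + 1 - p) = s (y + 1 - p) := by rw [← hmin, ← hmin, hxy]
  by_cases hk : s (x + 1 - p) < k + 1
  · have := hs.eq_of_eq_of_lt hblock hk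
    have := (hs.lt_iff _).1 hk
    omega
  · have hcol := hr.eq_of_eq_of_lt hcol (by rw [← hsub]; omega)
    have := hs.lt_iff (x + 1 - p)
    have := hs.lt_iff (y + 1 - p)
    simp only [collapse] at hcol
    omega

theorem inflate_le_iff (hr : IsPaddedPerm m r) (hm : 0 < m) (hs : IsPaddedPerm (k + 1) s)
    (hr₀ : r p = 0) (x : ℕ) : inflate p k r s x ≤ k ↔ p ≤ x ∧ x ≤ p + k := by
  have := (isPaddedPerm_inflate hr hm hs hr₀).mem_block_iff (isBlock_inflate hs hr₀) (by omega)
    (x := x)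
  omega

theorem noNestedSteps_quotient_of_inflate (hs : IsPaddedPerm (k + 1) s) (hr₀ : r p = 0)
    (hA : NoNestedSteps (inflate p k r s)) : NoNestedSteps r := by
  intro i j
  have hsub : ∀ y, inflate p k r s (expand p k y) - k = r y ∧
      inflate p k r s (expand p k y + 1) - k = r (y + 1) := fun y => by
    simp only [inflate_sub hs hr₀, collapse_expand, collapse_expand_add_one, and_self]
  have := hsub i
  have := hsub j
  have := hA (expand p k i) (expand p k j)
  omega

theorem noNestedSteps_block_of_inflate (hr : IsPaddedPerm m r) (hm : 0 < m)
    (hs : IsPaddedPerm (k + 1) s) (hr₀ : r p = 0) (hA : NoNestedSteps (inflate p k r s)) :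
    NoNestedSteps s := by
  intro i j
  have hp := (hr.lt_iff p).1 (by omega)
  have hmin : ∀ t, min (inflate p k r s (p - 1 + t)) (k + 1) = s t := fun t => by
    rw [min_inflate hr hm hs hr₀, show p - 1 + t + 1 - p = t by omega]
  have := hmin i
  have := hmin (i + 1)
  have := hmin j
  have := hmin (j + 1)
  have := hA (p - 1 + i) (p - 1 + j)
  simp only [← add_assoc] at *
  omega

theorem apply_collapse_add_one (hs : IsPaddedPerm (k + 1) s) (hr₀ : r p = 0)
    (hne : inflate p k r s x - k ≠ inflate p k r s (x + 1) - k) :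
    r (collapse p k x + 1) = inflate p k r s (x + 1) - k := by
  rw [inflate_sub hs hr₀, inflate_sub hs hr₀] at hne
  rw [inflate_sub hs hr₀, (collapse_add_one p k x).resolve_left fun h => hne (by rw [h])]

theorem noNestedSteps_inflate (hr : IsPaddedPerm m r) (hm : 0 < m) (hs : IsPaddedPerm (k + 1) s)
    (hr₀ : r p = 0) (hAr : NoNestedSteps r) (hAs : NoNestedSteps s) :
    NoNestedSteps (inflate p k r s) := by
  intro i j
  have hsub := inflate_sub hs hr₀
  have hmin := min_inflate hr hm hs hr₀
  have hlow := inflate_le_iff hr hm hs hr₀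
  set g := inflate p k r s
  have hquot : ∀ x, g x - k ≠ g (x + 1) - k → r (collapse p k x + 1) = g (x + 1) - k := fun x =>
    apply_collapse_add_one hs hr₀
  have hblock : ∀ x, p ≤ x + 1 → s (x + 1 - p + 1) = min (g (x + 1)) (k + 1) := fun x hx => by
    rw [hmin, show x + 1 + 1 - p = x + 1 - p + 1 by omega]
  have hi := hlow i
  have hi' := hlow (i + 1)
  have hj := hlow j
  have hj' := hlow (j + 1)
  constructor <;> rintro ⟨houter, hinner, houter'⟩
  · have hij : i ≠ j := by rintro rfl; omega
    by_cases htop : g (j + 1) ≤ k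
    · refine (hAs (i + 1 - p) (j + 1 - p)).1 ?_
      rw [hblock i (by omega), hblock j (by omega), ← hmin, ← hmin]
      omega
    · refine (hAr (collapse p k i) (collapse p k j)).1 ?_
      rw [hquot i (by omega), hquot j (by omega), ← hsub, ← hsub]
      omega
  · have hij : i ≠ j := by rintro rfl; omega
    by_cases htop : g j ≤ k
    · refine (hAs (i + 1 - p) (j + 1 - p)).2 ?_
      rw [hblock i (by omega), hblock j (by omega), ← hmin, ← hmin]
      omega
    · refine (hAr (collapse p k i) (collapse p k j)).2 ?_
      rw [hquot i (by omega), hquot j (by omega), ← hsub, ← hsub]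
      omega

theorem inflate_contract_blockAt (hf : IsPaddedPerm n f) (hb : IsBlock f p k 0) (hk : k < n) :
    inflate p k (contract p k f) (blockAt p k f) = f := by
  funext x
  have hblock := hf.mem_block_iff hb (by omega) (x := x)
  have hp := (hf.lt_iff p).1 (by have := hb p le_rfl (by omega); omega)
  simp only [inflate, contract, blockAt]
  by_cases hx : p ≤ x ∧ x ≤ p + k
  · have := hb (p + k) (by omega) le_rfl
    rw [collapse_eq_iff.2 hx, expand, if_neg (lt_irrefl p), show p + (x + 1 - p) - 1 = x by omega]
    omega
  · rw [expand_collapse hx]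
    have := hf.mem_block_iff hb (by omega) (x := p + (x + 1 - p) - 1)
    omega

theorem contract_eq_zero (hb : IsBlock f p k 0) : contract p k f p = 0 := by
  have := hb (p + k) (by omega) le_rfl
  rw [contract, expand, if_neg (lt_irrefl p)]
  omega

theorem isPaddedPerm_contract (hf : IsPaddedPerm (m + k) f) (hm : 0 < m)
    (hb : IsBlock f p k 0) : IsPaddedPerm m (contract p k f) := by
  have hp := hf.block_position_le hb (by omega)
  have hlow : ∀ y, f (expand p k y) ≤ k ↔ y = p := fun y => by
    have := hf.mem_block_iff hb (by omega) (x := expand p k y)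
    simp only [zero_le, true_and, zero_add] at this
    rw [this, ← collapse_eq_iff, collapse_expand]
  have hlt : ∀ y, contract p k f y < m ↔ 1 ≤ y ∧ y ≤ m := fun y => by
    have := hf.lt_iff (expand p k y)
    have : 1 ≤ expand p k y ∧ expand p k y ≤ m + k ↔ 1 ≤ y ∧ y ≤ m := by
      unfold expand
      split <;> omega
    simp only [contract]
    omega
  refine ⟨fun y => ?_, hlt, fun x hx y _ h => ?_⟩
  · have := hf.le (expand p k y)
    simp only [contract]
    omega
  · have hfx := (hlt x).2 hx
    simp only [contract] at h hfx
    have := hlow x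
    have := hlow y
    by_cases hxp : x = p
    · omega
    · have hexp := hf.eq_of_eq_of_lt (x := expand p k x) (y := expand p k y) (by omega) (by omega)
      rw [← collapse_expand p k x, hexp, collapse_expand]

theorem isPaddedPerm_blockAt (hf : IsPaddedPerm n f) (hb : IsBlock f p k 0) (hk : k < n) :
    IsPaddedPerm (k + 1) (blockAt p k f) := by
  have hp := (hf.lt_iff p).1 (by have := hb p le_rfl (by omega); omega)
  have hlt : ∀ t, f (p + t - 1) < k + 1 ↔ 1 ≤ t ∧ t ≤ k + 1 := fun t => by
    have := hf.mem_block_iff hb (by omega) (x := p + t - 1)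
    omega
  refine ⟨fun t => min_le_right _ _, fun t => ?_, fun t ht u hu h => ?_⟩
  · have := hlt t
    simp only [blockAt]
    omega
  · have := (hlt t).2 ht
    have := (hlt u).2 hu
    simp only [blockAt] at h
    have := hf.eq_of_eq_of_lt (x := p + t - 1) (y := p + u - 1) (by omega) (by omega)
    simp only [Set.mem_Icc] at ht hu
    omega

theorem isBlock_contract (hb : IsBlock f q l 0) (p : ℕ) (hkl : k ≤ l) :
    IsBlock (contract p k f) q (l - k) 0 := by
  intro y hqy hyq
  have := hb (expand p k y) (by simp only [expand]; split_ifs <;> omega)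
    (by simp only [expand]; split_ifs <;> omega)
  simp only [contract]
  omega

theorem isBlock_of_contract (hb : IsBlock (contract p k f) q l 0) (hp : IsBlock f p k 0)
    (hqp : q ≤ p) (hpq : p ≤ q + l) : IsBlock f q (l + k) 0 := by
  intro x hqx hxq
  by_cases hx : p ≤ x ∧ x ≤ p + k
  · have := hp x hx.1 hx.2
    omega
  · have := hb (collapse p k x) (by simp only [collapse]; omega) (by simp only [collapse]; omega)
    rw [contract, expand_collapse hx] at this
    omega

theorem isBottomSimple_contract (hf : IsPaddedPerm (m + k) f) (hm : 0 < m) (hb : IsBlock f p k 0)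
    (hmax : ∀ l q, l + 1 < m + k → IsBlock f q l 0 → l ≤ k) :
    IsBottomSimple m (contract p k f) := by
  intro q l hlm hbl
  have hp : contract p k f p = 0 := contract_eq_zero hb
  have hqp := ((isPaddedPerm_contract hf hm hb).mem_block_iff hbl (by omega) (x := p)).1 (by omega)
  have := hmax (l + k) q (by omega) (isBlock_of_contract hbl hb hqp.1 hqp.2)
  omega

theorem le_of_isBlock_inflate (hs : IsPaddedPerm (k + 1) s) (hr₀ : r p = 0)
    (hr : IsBottomSimple m r) (hb : IsBlock (inflate p k r s) q l 0) (hl : l + 1 < m + k) :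
    l ≤ k := by
  by_contra! hkl
  have hbr := isBlock_contract hb p hkl.le
  rw [contract_inflate hs hr₀] at hbr
  have := hr q (l - k) (by omega) hbr
  omega

theorem exists_longest_isBlock_zero (hf : IsPaddedPerm n f) (hn : 2 ≤ n) :
    ∃ k p, k + 1 < n ∧ IsBlock f p k 0 ∧ ∀ l q, l + 1 < n → IsBlock f q l 0 → l ≤ k := by
  let lengths : Set ℕ := {k | k + 1 < n ∧ ∃ p, IsBlock f p k 0}
  have hbdd : BddAbove lengths := ⟨n, fun k hk => by have := hk.1; omega⟩
  have hne : lengths.Nonempty := by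
    obtain ⟨z, hz⟩ := hf.exists_eq (v := 0) (by omega)
    refine ⟨0, by omega, z, fun x hzx hxz => ?_⟩
    obtain rfl : x = z := by omega
    omega
  obtain ⟨hk, p, hp⟩ := Nat.sSup_mem hne hbdd
  exact ⟨_, p, hk, hp, fun l q hl hq => le_csSup hbdd ⟨hl, q, hq⟩⟩

end Inflation

section Decomposition

variable {i j n : ℕ} {f r s r' s' : ℕ → ℕ}

/-- The padded permutations of length `n` in the class `A`. -/
def paddedA (n : ℕ) : Set (ℕ → ℕ) := {f | IsPaddedPerm n f ∧ NoNestedSteps f}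

/-- The simple padded permutations of length `n` in the class `A`. -/
def simplePaddedA (n : ℕ) : Set (ℕ → ℕ) := {f | f ∈ paddedA n ∧ IsBottomSimple n f}

/-- The first position carrying the value `0`; it is junk if there is none. -/
noncomputable def zeroPosition (r : ℕ → ℕ) : ℕ := sInf {x | r x = 0}

theorem apply_zeroPosition (hr : IsPaddedPerm n r) (hn : 0 < n) : r (zeroPosition r) = 0 :=
  Nat.sInf_mem (hr.exists_eq hn)

theorem inflate_mem_paddedA (hi : i ∈ Finset.Icc 2 n) (hr : r ∈ simplePaddedA i)
    (hs : s ∈ paddedA (n - i + 1)) : inflate (zeroPosition r) (n - i) r s ∈ paddedA n := by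
  obtain ⟨hi, hin⟩ := Finset.mem_Icc.1 hi
  obtain ⟨⟨hr, hAr⟩, -⟩ := hr
  have hr₀ := apply_zeroPosition hr (by omega)
  have hpad := isPaddedPerm_inflate hr (by omega) hs.1 hr₀
  rw [Nat.add_sub_cancel' hin] at hpad
  exact ⟨hpad, noNestedSteps_inflate hr (by omega) hs.1 hr₀ hAr hs.2⟩

theorem exists_inflate_eq (hf : f ∈ paddedA n) (hn : 2 ≤ n) :
    ∃ i ∈ Finset.Icc 2 n, ∃ r ∈ simplePaddedA i, ∃ s ∈ paddedA (n - i + 1),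
      inflate (zeroPosition r) (n - i) r s = f := by
  obtain ⟨hf, hA⟩ := hf
  obtain ⟨k, p, hk, hb, hmax⟩ := exists_longest_isBlock_zero hf hn
  obtain ⟨i, rfl⟩ : ∃ i, n = i + k := ⟨n - k, by omega⟩
  have hr := isPaddedPerm_contract hf (by omega) hb
  have hs := isPaddedPerm_blockAt hf hb (by omega)
  have hr₀ := contract_eq_zero hb
  have hzero : zeroPosition (contract p k f) = p :=
    hr.eq_of_eq_of_lt (by rw [apply_zeroPosition hr (by omega), hr₀])
      (by rw [apply_zeroPosition hr (by omega)]; omega)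
  have hinf := inflate_contract_blockAt hf hb (by omega)
  rw [← hinf] at hA
  refine ⟨i, Finset.mem_Icc.2 (by omega), contract p k f,
    ⟨⟨hr, noNestedSteps_quotient_of_inflate hs hr₀ hA⟩,
      isBottomSimple_contract hf (by omega) hb hmax⟩, blockAt p k f, ?_, ?_⟩
  · rw [Nat.add_sub_cancel_left]
    exact ⟨hs, noNestedSteps_block_of_inflate hr (by omega) hs hr₀ hA⟩
  · rw [Nat.add_sub_cancel_left, hzero, hinf]

theorem le_of_inflate_eq (hi : i ∈ Finset.Icc 2 n) (hj : j ∈ Finset.Icc 2 n)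
    (hr : r ∈ simplePaddedA i) (hs : s ∈ paddedA (n - i + 1)) (hr' : r' ∈ simplePaddedA j)
    (hs' : s' ∈ paddedA (n - j + 1))
    (h : inflate (zeroPosition r) (n - i) r s = inflate (zeroPosition r') (n - j) r' s') :
    i ≤ j := by
  rw [Finset.mem_Icc] at hi hj
  have hb := isBlock_inflate hs'.1 (apply_zeroPosition hr'.1.1 (by omega))
  rw [← h] at hb
  have := le_of_isBlock_inflate hs.1 (apply_zeroPosition hr.1.1 (by omega)) hr.2 hb (by omega)
  omega

theorem inflate_zeroPosition_injective (hi : i ∈ Finset.Icc 2 n) (hr : r ∈ simplePaddedA i)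
    (hs : s ∈ paddedA (n - i + 1)) (hr' : r' ∈ simplePaddedA i) (hs' : s' ∈ paddedA (n - i + 1))
    (h : inflate (zeroPosition r) (n - i) r s = inflate (zeroPosition r') (n - i) r' s') :
    r = r' ∧ s = s' := by
  have hf := (inflate_mem_paddedA hi hr hs).1
  rw [Finset.mem_Icc] at hi
  have hr₀ := apply_zeroPosition hr.1.1 (by omega)
  have hr₀' := apply_zeroPosition hr'.1.1 (by omega)
  have hzero := hf.block_position_unique (isBlock_inflate hs.1 hr₀)
    (h ▸ isBlock_inflate hs'.1 hr₀') (by omega)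
  constructor
  · rw [← contract_inflate hs.1 hr₀, h, hzero, contract_inflate hs'.1 hr₀']
  · rw [← blockAt_inflate hr.1.1 (by omega) hs.1 hr₀, h, hzero,
      blockAt_inflate hr'.1.1 (by omega) hs'.1 hr₀']

/-- Inflation at the entry `0`, on all pairs of a simple permutation of length `i ≥ 2` and a
permutation of length `n - i + 1` in the class `A`. -/
noncomputable def inflateZero (n : ℕ)
    (t : Σ i : Finset.Icc 2 n, simplePaddedA i × paddedA (n - i + 1)) : paddedA n :=
  ⟨inflate (zeroPosition t.2.1) (n - t.1) t.2.1 t.2.2,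
    inflate_mem_paddedA t.1.2 t.2.1.2 t.2.2.2⟩

theorem inflateZero_injective (n : ℕ) : Function.Injective (inflateZero n) := by
  rintro ⟨⟨i, hi⟩, ⟨r, hr⟩, s, hs⟩ ⟨⟨j, hj⟩, ⟨r', hr'⟩, s', hs'⟩ h
  have h := congrArg Subtype.val h
  obtain rfl : i = j := le_antisymm (le_of_inflate_eq hi hj hr hs hr' hs' h)
    (le_of_inflate_eq hj hi hr' hs' hr hs h.symm)
  obtain ⟨rfl, rfl⟩ := inflate_zeroPosition_injective hi hr hs hr' hs' h
  rfl

theorem inflateZero_surjective (hn : 2 ≤ n) : Function.Surjective (inflateZero n) := by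
  rintro ⟨f, hf⟩
  obtain ⟨i, hi, r, hr, s, hs, h⟩ := exists_inflate_eq hf hn
  exact ⟨⟨⟨i, hi⟩, ⟨r, hr⟩, s, hs⟩, Subtype.ext h⟩

end Decomposition

section Transfer

variable {n x : ℕ} {π : Equiv.Perm (Fin n)}

/-- A permutation of `Fin n` as a padded permutation. -/
def padPerm (π : Equiv.Perm (Fin n)) (x : ℕ) : ℕ :=
  if h : 1 ≤ x ∧ x ≤ n then π ⟨x - 1, by omega⟩ else n

theorem padPerm_add_one (π : Equiv.Perm (Fin n)) (a : Fin n) : padPerm π (a + 1) = π a := by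
  simp [padPerm]

theorem padPerm_add_two {a a' : Fin n} (h : (a' : ℕ) = a + 1) : padPerm π (a + 1 + 1) = π a' := by
  rw [← h, padPerm_add_one]

theorem padPerm_of_notMem (π : Equiv.Perm (Fin n)) (hx : ¬(1 ≤ x ∧ x ≤ n)) : padPerm π x = n :=
  dif_neg hx

theorem exists_eq_add_one (hx : 1 ≤ x ∧ x ≤ n) : ∃ a : Fin n, x = a + 1 :=
  ⟨⟨x - 1, by omega⟩, by simp only; omega⟩

theorem isPaddedPerm_padPerm (π : Equiv.Perm (Fin n)) : IsPaddedPerm n (padPerm π) where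
  le x := by
    by_cases hx : 1 ≤ x ∧ x ≤ n
    · obtain ⟨a, rfl⟩ := exists_eq_add_one hx
      rw [padPerm_add_one]
      omega
    · rw [padPerm_of_notMem π hx]
  lt_iff x := by
    by_cases hx : 1 ≤ x ∧ x ≤ n
    · obtain ⟨a, rfl⟩ := exists_eq_add_one hx
      simp only [padPerm_add_one, hx, and_self, iff_true]
      omega
    · simp only [padPerm_of_notMem π hx, hx, lt_self_iff_false]
  injOn x hx y hy h := by
    obtain ⟨a, rfl⟩ := exists_eq_add_one hx
    obtain ⟨b, rfl⟩ := exists_eq_add_one hy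
    rw [padPerm_add_one, padPerm_add_one] at h
    rw [π.injective (Fin.ext h)]

theorem padPerm_injective (n : ℕ) :
    Function.Injective (padPerm : Equiv.Perm (Fin n) → ℕ → ℕ) := by
  intro π τ h
  ext a
  rw [← padPerm_add_one, h, padPerm_add_one]

theorem exists_padPerm_eq {f : ℕ → ℕ} (hf : IsPaddedPerm n f) :
    ∃ π : Equiv.Perm (Fin n), padPerm π = f := by
  let g : Fin n → Fin n := fun a => ⟨f (a + 1), (hf.lt_iff _).2 (by omega)⟩
  have hg : Function.Injective g := fun a b h => by
    have := hf.eq_of_eq_of_lt (Fin.mk.inj h) (g a).2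
    omega
  refine ⟨Equiv.ofBijective g (Finite.injective_iff_bijective.1 hg), funext fun x => ?_⟩
  by_cases hx : 1 ≤ x ∧ x ≤ n
  · obtain ⟨a, rfl⟩ := exists_eq_add_one hx
    rw [padPerm_add_one]
    rfl
  · have := hf.le x
    have := hf.lt_iff x
    rw [padPerm_of_notMem _ hx]
    omega

theorem pattern_of_nested_ascents
    (h : ∃ i j, padPerm π i < padPerm π j ∧ padPerm π j < padPerm π (j + 1) ∧
      padPerm π (j + 1) < padPerm π (i + 1)) : P1423 π ∨ P2314 π ∨ P231final π := by
  obtain ⟨i, j, h₁, h₂, h₃⟩ := h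
  have hpad := isPaddedPerm_padPerm π
  have hj' : padPerm π (j + 1) < n := h₃.trans_le (hpad.le _)
  obtain ⟨b', hb⟩ := exists_eq_add_one ((hpad.lt_iff _).1 hj')
  obtain ⟨b, rfl⟩ := exists_eq_add_one ((hpad.lt_iff j).1 (by omega))
  obtain ⟨a, rfl⟩ := exists_eq_add_one ((hpad.lt_iff i).1 (by omega))
  have hab : (a : ℕ) ≠ b := fun h => by rw [h] at h₁; omega
  have hab' : (a : ℕ) ≠ b' := fun h => by rw [hb, ← h] at h₂; omega
  have hba' : (a + 1 : ℕ) ≠ b := fun h => by rw [h] at h₃; omega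
  rw [hb] at h₂ h₃
  by_cases ha : (a : ℕ) + 1 < n
  · have ha' : ((⟨a + 1, ha⟩ : Fin n) : ℕ) = a + 1 := rfl
    rw [padPerm_add_two ha'] at h₃
    simp only [padPerm_add_one, Fin.val_fin_lt] at h₁ h₂ h₃
    rcases lt_or_gt_of_ne hab with h | h
    · exact Or.inl ⟨a, _, b, b', ha', by omega, by omega, h₁, h₂, h₃⟩
    · exact Or.inr (Or.inl ⟨b, b', a, _, by omega, ha', by omega, h₁, h₂, h₃⟩)
  · simp only [padPerm_add_one, Fin.val_fin_lt] at h₁ h₂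
    exact Or.inr (Or.inr ⟨b, b', a, by omega, by omega, by omega, h₁, h₂⟩)

theorem exists_nested_ascents_of_pattern (h : P1423 π ∨ P2314 π ∨ P231final π) :
    ∃ i j, padPerm π i < padPerm π j ∧ padPerm π j < padPerm π (j + 1) ∧
      padPerm π (j + 1) < padPerm π (i + 1) := by
  rcases h with ⟨a, a', b, b', ha, hb, -, h₁, h₂, h₃⟩ | ⟨b, b', a, a', hb, ha, -, h₁, h₂, h₃⟩ |
    ⟨b, b', a, hb, ha, -, h₁, h₂⟩ <;> refine ⟨a + 1, b + 1, ?_⟩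
  · simpa only [padPerm_add_two ha, padPerm_add_two hb, padPerm_add_one] using ⟨h₁, h₂, h₃⟩
  · simpa only [padPerm_add_two ha, padPerm_add_two hb, padPerm_add_one] using ⟨h₁, h₂, h₃⟩
  · have hlast : padPerm π (a + 1 + 1) = n := padPerm_of_notMem π (by omega)
    simpa only [hlast, padPerm_add_two hb, padPerm_add_one] using ⟨h₁, h₂, (π b').2⟩

theorem pattern_of_nested_descents
    (h : ∃ i j, padPerm π (i + 1) < padPerm π (j + 1) ∧ padPerm π (j + 1) < padPerm π j ∧
      padPerm π j < padPerm π i) : P4132 π ∨ P3241 π ∨ P132initial π := by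
  obtain ⟨i, j, h₁, h₂, h₃⟩ := h
  have hpad := isPaddedPerm_padPerm π
  have hj : padPerm π j < n := h₃.trans_le (hpad.le _)
  obtain ⟨b, rfl⟩ := exists_eq_add_one ((hpad.lt_iff _).1 hj)
  obtain ⟨b', hb⟩ := exists_eq_add_one ((hpad.lt_iff (b + 1 + 1)).1 (by omega))
  obtain ⟨a', ha⟩ := exists_eq_add_one ((hpad.lt_iff (i + 1)).1 (by omega))
  have hab : i ≠ b + 1 := by rintro rfl; omega
  have hab' : i ≠ b + 1 + 1 := by rintro rfl; omega
  have hba' : i ≠ b := by rintro rfl; omega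
  rw [ha, hb] at h₁
  rw [hb] at h₂
  obtain rfl | hi := Nat.eq_zero_or_pos i
  · simp only [padPerm_add_one, Fin.val_fin_lt] at h₁ h₂
    exact Or.inr (Or.inr ⟨a', b, b', by omega, by omega, by omega, h₁, h₂⟩)
  · obtain ⟨a, rfl⟩ := exists_eq_add_one (n := n) (x := i) (by omega)
    simp only [padPerm_add_one, Fin.val_fin_lt] at h₁ h₂ h₃
    rcases lt_or_ge (a : ℕ) b with h | h
    · exact Or.inl ⟨a, a', b, b', by omega, by omega, by omega, h₁, h₂, h₃⟩
    · exact Or.inr (Or.inl ⟨b, b', a, a', by omega, by omega, by omega, h₁, h₂, h₃⟩)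

theorem exists_nested_descents_of_pattern (h : P4132 π ∨ P3241 π ∨ P132initial π) :
    ∃ i j, padPerm π (i + 1) < padPerm π (j + 1) ∧ padPerm π (j + 1) < padPerm π j ∧
      padPerm π j < padPerm π i := by
  rcases h with ⟨a, a', b, b', ha, hb, -, h₁, h₂, h₃⟩ | ⟨b, b', a, a', hb, ha, -, h₁, h₂, h₃⟩ |
    ⟨a', b, b', ha, hb, -, h₁, h₂⟩
  · refine ⟨a + 1, b + 1, ?_⟩
    simpa only [padPerm_add_two ha, padPerm_add_two hb, padPerm_add_one] using ⟨h₁, h₂, h₃⟩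
  · refine ⟨a + 1, b + 1, ?_⟩
    simpa only [padPerm_add_two ha, padPerm_add_two hb, padPerm_add_one] using ⟨h₁, h₂, h₃⟩
  · refine ⟨a', b + 1, ?_⟩
    have hfirst : padPerm π a' = n := padPerm_of_notMem π (by omega)
    simpa only [hfirst, padPerm_add_two hb, padPerm_add_one] using ⟨h₁, h₂, (π b).2⟩

theorem memA_iff_noNestedSteps : MemA π ↔ NoNestedSteps (padPerm π) := by
  have hasc : (∃ i j, _) ↔ _ :=
    ⟨pattern_of_nested_ascents (π := π), exists_nested_ascents_of_pattern⟩
  have hdesc : (∃ i j, _) ↔ _ :=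
    ⟨pattern_of_nested_descents (π := π), exists_nested_descents_of_pattern⟩
  simp only [NoNestedSteps, forall_and, ← not_exists, hasc, hdesc]
  unfold MemA
  tauto

theorem isBlock_padPerm {a b : Fin n} {v : ℕ} (hab : a ≤ b)
    (hv : ∀ x, a ≤ x → x ≤ b → v ≤ (π x : ℕ) ∧ (π x : ℕ) ≤ v + (b - a)) :
    IsBlock (padPerm π) (a + 1) (b - a) v := by
  intro x hax hxb
  obtain ⟨c, rfl⟩ := exists_eq_add_one (n := n) (x := x) (by omega)
  rw [padPerm_add_one]
  exact hv c (by omega) (by omega)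

theorem isPermBlock_of_isBlock {a b : Fin n} {k v : ℕ} (hk : (b : ℕ) = a + k)
    (hb : IsBlock (padPerm π) (a + 1) k v) : IsPermBlock π a b := by
  refine ⟨v, fun x hax hxb => ?_⟩
  rw [← padPerm_add_one, hk, Nat.add_sub_cancel_left]
  exact hb _ (by omega) (by omega)

theorem isSimplePerm_iff_isBottomSimple (hA : MemA π) :
    IsSimplePerm π ↔ IsBottomSimple n (padPerm π) := by
  have hpad := isPaddedPerm_padPerm π
  constructor
  · intro hsimple p k hkn hb
    have hp := hpad.block_position_le hb (by omega)
    obtain ⟨a, rfl⟩ := exists_eq_add_one (n := n) (x := p) (by omega)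
    let b : Fin n := ⟨a + k, by omega⟩
    rcases hsimple a b (by simp [b, Fin.le_def]) (isPermBlock_of_isBlock rfl hb) with h | h
    · simpa [b] using congrArg Fin.val h
    · simp only [b] at h
      omega
  · rintro hsimple a b hab ⟨v, hv⟩
    have hb := isBlock_padPerm hab hv
    have hvn := hpad.block_top_lt hb (by omega) (by omega)
    by_contra! hproper
    obtain ⟨p, l, hl, hln, hbl⟩ := exists_isBlock_zero_of_isBlock hpad
      (memA_iff_noNestedSteps.1 hA) hb hvn (by omega) (by omega)
    exact hl.ne' (hsimple p l hln hbl)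

theorem image_padPerm_memA (n : ℕ) :
    padPerm '' {π : Equiv.Perm (Fin n) | MemA π} = paddedA n := by
  ext f
  constructor
  · rintro ⟨π, hπ, rfl⟩
    exact ⟨isPaddedPerm_padPerm π, memA_iff_noNestedSteps.1 hπ⟩
  · rintro ⟨hf, hA⟩
    obtain ⟨π, rfl⟩ := exists_padPerm_eq hf
    exact ⟨π, memA_iff_noNestedSteps.2 hA, rfl⟩

theorem image_padPerm_isSimplePerm (n : ℕ) :
    padPerm '' {π : Equiv.Perm (Fin n) | MemA π ∧ IsSimplePerm π} = simplePaddedA n := by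
  ext f
  simp only [simplePaddedA, ← image_padPerm_memA]
  constructor
  · rintro ⟨π, ⟨hA, hsimple⟩, rfl⟩
    exact ⟨⟨π, hA, rfl⟩, (isSimplePerm_iff_isBottomSimple hA).1 hsimple⟩
  · rintro ⟨⟨π, hA, rfl⟩, hsimple⟩
    exact ⟨π, ⟨hA, (isSimplePerm_iff_isBottomSimple hA).2 hsimple⟩, rfl⟩

theorem aCard_eq_card_paddedA (n : ℕ) : aCard n = Nat.card (paddedA n) := by
  rw [← image_padPerm_memA, Nat.card_image_of_injective (padPerm_injective n)]
  rfl

theorem sCard_eq_card_simplePaddedA (n : ℕ) : sCard n = Nat.card (simplePaddedA n) := by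
  rw [← image_padPerm_isSimplePerm, Nat.card_image_of_injective (padPerm_injective n)]
  rfl

instance (n : ℕ) : Finite (paddedA n) :=
  image_padPerm_memA n ▸ (Set.toFinite _).image _

instance (n : ℕ) : Finite (simplePaddedA n) :=
  image_padPerm_isSimplePerm n ▸ (Set.toFinite _).image _

end Transfer

theorem aCard_one : aCard 1 = 1 := by
  have hA (π : Equiv.Perm (Fin 1)) : MemA π := by
    simp [MemA, P3241, P1423, P4132, P2314, P231final, P132initial]
  simp [aCard, hA]

/-- `a_1 = 1` and, for `n ≥ 2`, `a_n = ∑_{i=2}^{n} s_i · a_{n−i+1}`. -/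
theorem aCard_recursion :
    aCard 1 = 1 ∧ ∀ n : ℕ, 2 ≤ n →
      aCard n = ∑ i ∈ Finset.Icc 2 n, sCard i * aCard (n - i + 1) := by
  refine ⟨aCard_one, fun n hn => ?_⟩
  have hcard := Nat.card_eq_of_bijective (inflateZero n)
    ⟨inflateZero_injective n, inflateZero_surjective hn⟩
  simp only [aCard_eq_card_paddedA, sCard_eq_card_simplePaddedA, ← Nat.card_prod]
  rw [← hcard, Nat.card_sigma,
    Finset.sum_coe_sort (Finset.Icc 2 n) fun i => Nat.card (simplePaddedA i × paddedA (n - i + 1))]
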